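/- Let μ, δ, c ∈ ℝ and 0 < ρ < 1, and let e^{μ,δ}_{1,ρ}(z) = Σ_{n=0}^∞ z^n/(Γ(n+μ)·Γ(δ−ρn)). Then for every z > 0 the function z ↦ z^{μ−1}·e^{μ,δ}_{1,ρ}(c·z) is differentiable and (d/dz)( z^{μ−1}·e^{μ,δ}_{1,ρ}(c·z) ) = z^{μ−2}·e^{μ−1,δ}_{1,ρ}(c·z). -/

import Mathlib

/- The Wright-type function `e^{μ,δ}_{1,ρ}(z) = Σ_{n≥0} zⁿ/(Γ(n+μ)·Γ(δ−ρn))`;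
`Real.Gamma` vanishes at nonpositive integers, realizing the convention `1/Γ = 0` there. -/
noncomputable def wrightE (ρ μ δ z : ℝ) : ℝ :=
  ∑' n : ℕ, z ^ n / (Real.Gamma ((n : ℝ) + μ) * Real.Gamma (δ - ρ * n))

/-!
Write `E_μ = e^{μ,δ}_{1,ρ}`, with coefficients `aₙ(μ)`. The recurrence `1/Γ(s) = s/Γ(s+1)` gives
`n aₙ(μ) = aₙ(μ−1) − (μ−1) aₙ(μ)`, i.e. the Euler identity `z E_μ' = E_{μ−1} − (μ−1) E_μ`, and the
theorem is the product rule for `z^(μ−1) E_μ(cz)`. The series is entire because `1/Γ(δ−ρn)` grows at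
most like a power of `Γ(n+μ)` with exponent less than one, by the reflection formula and the
log-convexity of `Γ`.
-/

open Asymptotics Filter Topology Set

lemma hasDerivAt_tsum_mul_pow {𝕜 : Type*} [RCLike 𝕜] {a : ℕ → 𝕜} {r x : 𝕜}
    (hr : Summable fun n : ℕ => n * a n * r ^ n) (hx : ‖x‖ < ‖r‖) :
    HasDerivAt (fun y => ∑' n, a n * y ^ n) (∑' n : ℕ, n * a n * x ^ (n - 1)) x := by
  have hr0 : r ≠ 0 := norm_pos_iff.1 ((norm_nonneg x).trans_lt hx)
  have hbound : Summable fun n : ℕ => ‖n * a n * r ^ (n - 1)‖ := by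
    refine (hr.norm.div_const ‖r‖).congr fun n => ?_
    rcases n with _ | n
    · simp
    · rw [← norm_div, Nat.add_sub_cancel, pow_succ, ← mul_assoc, mul_div_cancel_right₀ _ hr0]
  have hzero : Summable fun n => a n * (0 : 𝕜) ^ n :=
    summable_of_ne_finset_zero (s := {0}) fun n hn => by
      rw [zero_pow (Finset.notMem_singleton.1 hn), mul_zero]
  have hderiv (n : ℕ) (y : 𝕜) : HasDerivAt (fun y => a n * y ^ n) (n * a n * y ^ (n - 1)) y :=
    ((hasDerivAt_pow n y).const_mul (a n)).congr_deriv (by ring)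
  have hle (n : ℕ) (y : 𝕜) (hy : y ∈ Metric.ball (0 : 𝕜) ‖r‖) :
      ‖n * a n * y ^ (n - 1)‖ ≤ ‖n * a n * r ^ (n - 1)‖ := by
    rw [norm_mul, norm_mul _ (r ^ _), norm_pow, norm_pow]
    gcongr
    exact (mem_ball_zero_iff.1 hy).le
  exact hasDerivAt_tsum_of_isPreconnected hbound Metric.isOpen_ball
    (convex_ball (0 : 𝕜) ‖r‖).isPreconnected (fun n y _ => hderiv n y) hle
    (Metric.mem_ball_self (norm_pos_iff.2 hr0)) hzero (mem_ball_zero_iff.2 hx)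

lemma mul_inv_Gamma_add_one (s : ℝ) : s * (Real.Gamma (s + 1))⁻¹ = (Real.Gamma s)⁻¹ := by
  rcases eq_or_ne s 0 with rfl | hs
  · simp
  · rw [Real.Gamma_add_one hs, mul_inv, mul_inv_cancel_left₀ hs]

lemma abs_inv_Gamma_le_Gamma_one_sub {s : ℝ} (hs : s < 1) :
    |(Real.Gamma s)⁻¹| ≤ Real.Gamma (1 - s) := by
  have hpos : 0 < Real.Gamma (1 - s) := Real.Gamma_pos_of_pos (sub_pos.2 hs)
  rcases eq_or_ne (Real.Gamma s) 0 with h0 | h0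
  · simpa [h0] using hpos.le
  have hreflection := Real.Gamma_mul_Gamma_one_sub s
  have hsin : Real.sin (Real.pi * s) ≠ 0 := by
    intro h
    rw [h, div_zero] at hreflection
    exact mul_ne_zero h0 hpos.ne' hreflection
  have hone_le : 1 ≤ |Real.Gamma s| * Real.Gamma (1 - s) := by
    rw [← abs_of_pos hpos, ← abs_mul, hreflection, abs_div, abs_of_pos Real.pi_pos,
      one_le_div (abs_pos.2 hsin)]
    linarith [Real.abs_sin_le_one (Real.pi * s), Real.pi_gt_three]
  rwa [abs_inv, inv_le_iff_one_le_mul₀' (abs_pos.2 h0)]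

lemma tendsto_add_mul_atTop {ρ : ℝ} (hρ : 0 < ρ) (a : ℝ) :
    Tendsto (fun x : ℝ => a + ρ * x) atTop atTop :=
  tendsto_atTop_add_const_left _ a (tendsto_id.const_mul_atTop hρ)

lemma eventually_Gamma_add_pos (μ : ℝ) : ∀ᶠ x : ℝ in atTop, 0 < Real.Gamma (x + μ) := by
  filter_upwards [eventually_gt_atTop (-μ)] with x hx
  exact Real.Gamma_pos_of_pos (by linarith)

lemma isBigO_Gamma_add_mul_rpow_Gamma {ρ : ℝ} (hρ0 : 0 < ρ) (hρ1 : ρ < 1) (a μ : ℝ) :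
    (fun x : ℝ => Real.Gamma (a + ρ * x)) =O[atTop] fun x => Real.Gamma (x + μ) ^ ρ := by
  -- `t` is chosen so that `a + ρ x` lies below the convex combination `ρ (x + μ) + (1 - ρ) t`.
  obtain ⟨t, ht0, ht⟩ : ∃ t : ℝ, 0 < t ∧ (a - ρ * μ) / (1 - ρ) ≤ t :=
    ⟨max 1 ((a - ρ * μ) / (1 - ρ)), one_pos.trans_le (le_max_left _ _), le_max_right _ _⟩
  rw [div_le_iff₀ (sub_pos.2 hρ1)] at ht
  refine IsBigO.of_bound (Real.Gamma t ^ (1 - ρ)) ?_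
  filter_upwards [(tendsto_add_mul_atTop hρ0 a).eventually_ge_atTop 2,
    eventually_gt_atTop (-μ)] with x hx2 hxμ
  have hxμ : 0 < x + μ := by linarith
  rw [Real.norm_of_nonneg (Real.Gamma_pos_of_pos (by linarith)).le,
    Real.norm_of_nonneg (Real.rpow_pos_of_pos (Real.Gamma_pos_of_pos hxμ) ρ).le]
  calc Real.Gamma (a + ρ * x) ≤ Real.Gamma (ρ * (x + μ) + (1 - ρ) * t) :=
        Real.Gamma_strictMonoOn_Ici.monotoneOn hx2 (mem_Ici.2 (by linarith)) (by linarith)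
    _ ≤ Real.Gamma (x + μ) ^ ρ * Real.Gamma t ^ (1 - ρ) :=
        Real.Gamma_mul_add_mul_le_rpow_Gamma_mul_rpow_Gamma hxμ ht0 hρ0 (sub_pos.2 hρ1)
          (add_sub_cancel _ _)
    _ = Real.Gamma t ^ (1 - ρ) * Real.Gamma (x + μ) ^ ρ := mul_comm _ _

lemma isBigO_inv_Gamma_sub_mul_one {ρ : ℝ} (hρ : ρ ≤ 0) (δ : ℝ) :
    (fun x : ℝ => (Real.Gamma (δ - ρ * x))⁻¹) =O[atTop] fun _ => (1 : ℝ) := by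
  rcases hρ.eq_or_lt with rfl | hρ
  · simpa only [zero_mul, sub_zero] using isBigO_const_const _ one_ne_zero _
  refine IsBigO.of_bound 1 ?_
  filter_upwards [(tendsto_add_mul_atTop (neg_pos.2 hρ) δ).eventually_ge_atTop 2] with x hx
  have hx2 : 2 ≤ δ - ρ * x := by linarith
  have hone_le : 1 ≤ Real.Gamma (δ - ρ * x) :=
    Real.Gamma_two ▸ Real.Gamma_strictMonoOn_Ici.monotoneOn self_mem_Ici hx2 hx2
  rw [norm_one, mul_one, norm_inv, Real.norm_of_nonneg (zero_le_one.trans hone_le)]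
  exact inv_le_one_of_one_le₀ hone_le

lemma isBigO_inv_Gamma_sub_mul_rpow_Gamma {ρ : ℝ} (hρ : ρ < 1) (μ δ : ℝ) :
    (fun x : ℝ => (Real.Gamma (δ - ρ * x))⁻¹) =O[atTop]
      fun x => Real.Gamma (x + μ) ^ max ρ 0 := by
  rcases le_or_gt ρ 0 with hρ0 | hρ0
  · simpa only [max_eq_right hρ0, Real.rpow_zero] using isBigO_inv_Gamma_sub_mul_one hρ0 δ
  rw [max_eq_left hρ0.le]
  refine IsBigO.trans (IsBigO.of_bound' ?_) (isBigO_Gamma_add_mul_rpow_Gamma hρ0 hρ (1 - δ) μ)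
  filter_upwards [(tendsto_add_mul_atTop hρ0 (1 - δ)).eventually_gt_atTop 0] with x hx
  calc ‖(Real.Gamma (δ - ρ * x))⁻¹‖ ≤ Real.Gamma (1 - (δ - ρ * x)) :=
        abs_inv_Gamma_le_Gamma_one_sub (by linarith)
    _ = Real.Gamma (1 - δ + ρ * x) := by rw [← sub_add]
    _ ≤ ‖Real.Gamma (1 - δ + ρ * x)‖ := le_abs_self _

lemma summable_Gamma_rpow_neg_mul_pow {σ : ℝ} (hσ : 0 < σ) (μ x : ℝ) :
    Summable fun n : ℕ => Real.Gamma (n + μ) ^ (-σ) * x ^ n := by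
  have hlarge : Tendsto (fun n : ℕ => (n : ℝ) + μ) atTop atTop :=
    tendsto_atTop_add_const_right _ μ tendsto_natCast_atTop_atTop
  have hratio : Tendsto (fun n : ℕ => ((n : ℝ) + μ) ^ (-σ) * |x|) atTop (𝓝 0) := by
    simpa only [zero_mul, Function.comp_def] using
      ((tendsto_rpow_neg_atTop hσ).comp hlarge).mul_const |x|
  refine summable_of_ratio_norm_eventually_le one_half_lt_one ?_
  filter_upwards [hlarge.eventually_gt_atTop 0, hratio.eventually_le_const one_half_pos]
    with n hn hle
  have hΓ : 0 < Real.Gamma (n + μ) := Real.Gamma_pos_of_pos hn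
  have hstep : Real.Gamma ((n + 1 : ℕ) + μ) = (n + μ) * Real.Gamma (n + μ) := by
    rw [Nat.cast_add_one, add_right_comm, Real.Gamma_add_one hn.ne']
  calc ‖Real.Gamma ((n + 1 : ℕ) + μ) ^ (-σ) * x ^ (n + 1)‖
      = ((n + μ) ^ (-σ) * |x|) * ‖Real.Gamma (n + μ) ^ (-σ) * x ^ n‖ := by
        rw [hstep, Real.mul_rpow hn.le hΓ.le, pow_succ, norm_mul, norm_mul, norm_mul, norm_mul,
          Real.norm_of_nonneg (Real.rpow_pos_of_pos hn _).le, Real.norm_eq_abs x]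
        ring
    _ ≤ 1 / 2 * ‖Real.Gamma (n + μ) ^ (-σ) * x ^ n‖ := by gcongr

/-- The coefficient of `zⁿ` in `wrightE ρ μ δ z`, which lets `wrightE` be treated as a power series;
it is `0` when `n + μ` or `δ - ρ n` is a pole of `Γ`. -/
noncomputable def wrightCoeff (ρ μ δ : ℝ) (n : ℕ) : ℝ :=
  (Real.Gamma (n + μ))⁻¹ * (Real.Gamma (δ - ρ * n))⁻¹

lemma wrightE_eq_tsum (ρ μ δ : ℝ) :
    wrightE ρ μ δ = fun z => ∑' n, wrightCoeff ρ μ δ n * z ^ n := by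
  funext z
  simp only [wrightE, wrightCoeff, div_eq_mul_inv, mul_inv, mul_comm (z ^ _)]

lemma natCast_mul_wrightCoeff (ρ μ δ : ℝ) (n : ℕ) :
    n * wrightCoeff ρ μ δ n = wrightCoeff ρ (μ - 1) δ n - (μ - 1) * wrightCoeff ρ μ δ n := by
  have hΓ := mul_inv_Gamma_add_one (n + (μ - 1))
  rw [add_assoc, sub_add_cancel] at hΓ
  rw [wrightCoeff, wrightCoeff, ← hΓ]
  ring

lemma isBigO_wrightCoeff {ρ : ℝ} (hρ : ρ < 1) (μ δ : ℝ) :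
    wrightCoeff ρ μ δ =O[atTop] fun n : ℕ => Real.Gamma (n + μ) ^ (-(1 - max ρ 0)) := by
  have hinv := (isBigO_inv_Gamma_sub_mul_rpow_Gamma hρ μ δ).comp_tendsto
    tendsto_natCast_atTop_atTop
  refine ((isBigO_refl (fun n : ℕ => (Real.Gamma (n + μ))⁻¹) atTop).mul hinv).congr' .rfl ?_
  filter_upwards [tendsto_natCast_atTop_atTop.eventually (eventually_Gamma_add_pos μ)] with n hn
  rw [Function.comp_apply, neg_sub, Real.rpow_sub_one hn.ne', inv_mul_eq_div]

lemma summable_wrightCoeff_mul_pow {ρ : ℝ} (hρ : ρ < 1) (μ δ z : ℝ) :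
    Summable fun n => wrightCoeff ρ μ δ n * z ^ n :=
  summable_of_isBigO_nat
    (summable_Gamma_rpow_neg_mul_pow (sub_pos.2 (max_lt hρ one_pos)) μ z)
    ((isBigO_wrightCoeff hρ μ δ).mul (isBigO_refl _ _))

lemma hasSum_wrightCoeff_mul_pow {ρ : ℝ} (hρ : ρ < 1) (μ δ z : ℝ) :
    HasSum (fun n => wrightCoeff ρ μ δ n * z ^ n) (wrightE ρ μ δ z) := by
  rw [wrightE_eq_tsum]
  exact (summable_wrightCoeff_mul_pow hρ μ δ z).hasSum

lemma hasSum_natCast_mul_wrightCoeff_mul_pow {ρ : ℝ} (hρ : ρ < 1) (μ δ z : ℝ) :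
    HasSum (fun n : ℕ => n * wrightCoeff ρ μ δ n * z ^ n)
      (wrightE ρ (μ - 1) δ z - (μ - 1) * wrightE ρ μ δ z) := by
  refine ((hasSum_wrightCoeff_mul_pow hρ (μ - 1) δ z).sub
    ((hasSum_wrightCoeff_mul_pow hρ μ δ z).mul_left (μ - 1))).congr_fun fun n => ?_
  rw [natCast_mul_wrightCoeff, sub_mul, mul_assoc]

lemma hasDerivAt_wrightE {ρ : ℝ} (hρ : ρ < 1) (μ δ z : ℝ) :
    HasDerivAt (wrightE ρ μ δ) (∑' n : ℕ, n * wrightCoeff ρ μ δ n * z ^ (n - 1)) z := by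
  rw [wrightE_eq_tsum]
  refine hasDerivAt_tsum_mul_pow (r := ‖z‖ + 1)
    (hasSum_natCast_mul_wrightCoeff_mul_pow hρ μ δ _).summable ?_
  exact (lt_add_one ‖z‖).trans_le (le_abs_self _)

lemma mul_deriv_wrightE {ρ : ℝ} (hρ : ρ < 1) (μ δ z : ℝ) :
    z * deriv (wrightE ρ μ δ) z = wrightE ρ (μ - 1) δ z - (μ - 1) * wrightE ρ μ δ z := by
  rw [(hasDerivAt_wrightE hρ μ δ z).deriv, ← tsum_mul_left,
    ← (hasSum_natCast_mul_wrightCoeff_mul_pow hρ μ δ z).tsum_eq]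
  refine tsum_congr fun n => ?_
  rcases n with _ | n
  · simp
  · rw [Nat.add_sub_cancel, pow_succ]
    ring

/- For `z < 0`, Mathlib's `z ^ s` is `|z| ^ s * cos (π s)`, the real part of the principal power. -/
theorem wright_power_deriv_general (μ δ c : ℝ) {ρ : ℝ} (hρ : ρ < 1) {z : ℝ} (hz : z ≠ 0) :
    HasDerivAt (fun w : ℝ => w ^ (μ - 1) * wrightE ρ μ δ (c * w))
      (z ^ (μ - 2) * wrightE ρ (μ - 1) δ (c * z)) z := by
  have hexp : μ - 1 - 1 = μ - 2 := by ring
  have hpow : HasDerivAt (fun w : ℝ => w ^ (μ - 1)) ((μ - 1) * z ^ (μ - 2)) z :=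
    hexp ▸ Real.hasDerivAt_rpow_const (Or.inl hz)
  have hE : HasDerivAt (fun w => wrightE ρ μ δ (c * w)) (deriv (wrightE ρ μ δ) (c * z) * c) z :=
    (hasDerivAt_wrightE hρ μ δ (c * z)).differentiableAt.hasDerivAt.comp z
      (hasDerivAt_const_mul c)
  have hshift : z ^ (μ - 1) = z ^ (μ - 2) * z := by
    rw [← hexp, Real.rpow_sub_one hz (μ - 1), div_mul_cancel₀ _ hz]
  refine (hpow.mul hE).congr_deriv ?_
  rw [hshift]
  linear_combination z ^ (μ - 2) * mul_deriv_wrightE hρ μ δ (c * z)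

/- STATEMENT 10: third differentiation formula in (3.2):
`(d/dz)( z^{μ−1}·e^{μ,δ}_{1,ρ}(c·z) ) = z^{μ−2}·e^{μ−1,δ}_{1,ρ}(c·z)` for `z > 0`. -/
theorem wright_power_deriv (μ δ c ρ : ℝ) (hρ0 : 0 < ρ) (hρ1 : ρ < 1)
    (z : ℝ) (hz : 0 < z) :
    HasDerivAt (fun w : ℝ => w ^ (μ - 1) * wrightE ρ μ δ (c * w))
      (z ^ (μ - 2) * wrightE ρ (μ - 1) δ (c * z)) z :=
  wright_power_deriv_general μ δ c hρ1 hz.ne'
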